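/- Let P_{kn} ⊂ Sp_{2kn} be the Siegel parabolic (stabilizer of the standard maximal isotropic subspace spanned by the first kn standard basis vectors, i.e., matrices of block form [[a, b],[0, â]]). Let γ_{r_1,...,r_{k−1}} be the representative matrix of Lemma 5.1 and m(h_0, g_1, ..., g_{k−1}) = diag(g_{k−1}, ..., g_1, h_0, ĝ_1, ..., ĝ_{k−1}) with h_0 ∈ P_n ⊂ Sp_{2n} and each g_i ∈ GL_n lower block-triangular of type B^−_{r_i,n}, i.e., matrices with a zero block of size (n−r_i)×r_i in the upper right. Then γ_{r_1,...,r_{k−1}} · m(h_0, g_1, ..., g_{k−1}) · γ_{r_1,...,r_{k−1}}^{-1} ∈ P_{kn}. -/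

import Mathlib

open Matrix

variable (F : Type*) [Field F]

/-- The `m × m` matrix with ones on the antidiagonal and zeros elsewhere. -/
def Jmat (m : ℕ) : Matrix (Fin m) (Fin m) F :=
  Matrix.of fun i j => if (i : ℕ) + (j : ℕ) + 1 = m then 1 else 0

/-- The matrix of the symplectic form `[[0, J_{kn}], [−J_{kn}, 0]]` defining `Sp_{2kn}`,
in `n`-block coordinates (index set `Fin (2k) × Fin n`). -/
def OmegaB (k n : ℕ) : Matrix (Fin (2 * k) × Fin n) (Fin (2 * k) × Fin n) F :=
  Matrix.of fun p q =>
    if (p.1 : ℕ) + (q.1 : ℕ) + 1 = 2 * k ∧ (p.2 : ℕ) + (q.2 : ℕ) + 1 = n then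
      (if (p.1 : ℕ) < k then 1 else -1)
    else 0

/-- `Sp_{2kn}(F)` in `n`-block coordinates. -/
def SpB (k n : ℕ) : Set (Matrix (Fin (2 * k) × Fin n) (Fin (2 * k) × Fin n) F) :=
  {g | IsUnit g ∧ gᵀ * OmegaB F k n * g = OmegaB F k n}

/-- The matrix of the symplectic form defining `Sp_{2n}` (halves indexed by `Fin n`). -/
def Omega2 (n : ℕ) : Matrix (Fin n ⊕ Fin n) (Fin n ⊕ Fin n) F :=
  fromBlocks 0 (Jmat F n) (-(Jmat F n)) 0

/-- `μ_r = diag(1_r, 0)`. -/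
def muB (n r : ℕ) : Matrix (Fin n) (Fin n) F :=
  Matrix.of fun a b => if a = b ∧ (a : ℕ) < r then 1 else 0

/-- `μ'_r = diag(0, 1_r)`. -/
def muB' (n r : ℕ) : Matrix (Fin n) (Fin n) F :=
  Matrix.of fun a b => if a = b ∧ n ≤ (a : ℕ) + r then 1 else 0

/-- `ε_r = [[0, 0], [1_{n−r}, 0]]`. -/
def epsB (n r : ℕ) : Matrix (Fin n) (Fin n) F :=
  Matrix.of fun a b => if r ≤ (a : ℕ) ∧ (a : ℕ) = (b : ℕ) + r then 1 else 0

/-- `ε'_r = [[0, −1_{n−r}], [0, 0]]`. -/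
def epsB' (n r : ℕ) : Matrix (Fin n) (Fin n) F :=
  Matrix.of fun a b => if (a : ℕ) + r < n ∧ (b : ℕ) = (a : ℕ) + r then -1 else 0

/-- The representative `γ_{r₁,…,r_{k−1}}` of Lemma 5.1 (the `0`-indexed function `rr` gives
`rr (i−1) = rᵢ`): block diagonal `μ'_{k−1}, …, μ'_1, 1_{2n}, μ_1, …, μ_{k−1}`, with
`ε'_t` at block `(k−1−t, k+t)` and `ε_t` at block `(k+t, k−1−t)` for `1 ≤ t ≤ k−1`. -/
def gammaR (k n : ℕ) (rr : ℕ → ℕ) :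
    Matrix (Fin (2 * k) × Fin n) (Fin (2 * k) × Fin n) F :=
  Matrix.of fun p q =>
    let i := (p.1 : ℕ); let j := (q.1 : ℕ)
    if i = j ∧ i + 2 ≤ k then muB' F n (rr (k - 2 - i)) p.2 q.2
    else if i = j ∧ (i + 1 = k ∨ i = k) then (if p.2 = q.2 then 1 else 0)
    else if i = j ∧ k + 1 ≤ i then muB F n (rr (i - (k + 1))) p.2 q.2
    else if i + j + 1 = 2 * k ∧ i + 2 ≤ k then epsB' F n (rr (k - 2 - i)) p.2 q.2
    else if i + j + 1 = 2 * k ∧ j + 2 ≤ k then epsB F n (rr (k - 2 - j)) p.2 q.2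
    else 0

/-- `ĝ = J_n (gᵀ)⁻¹ J_n`. -/
noncomputable def hatN (n : ℕ) (g : Matrix (Fin n) (Fin n) F) : Matrix (Fin n) (Fin n) F :=
  Jmat F n * (gᵀ)⁻¹ * Jmat F n

/-- `m(h₀, g₁, …, g_{k−1}) = diag(g_{k−1}, …, g₁, h₀, ĝ₁, …, ĝ_{k−1})` (the `0`-indexed
function `g` gives `g (i−1) = gᵢ`), with `h₀` a `2n × 2n` matrix occupying the central
two block rows and columns. -/
noncomputable def mLevi (k n : ℕ) (g : ℕ → Matrix (Fin n) (Fin n) F)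
    (h0 : Matrix (Fin n ⊕ Fin n) (Fin n ⊕ Fin n) F) :
    Matrix (Fin (2 * k) × Fin n) (Fin (2 * k) × Fin n) F :=
  Matrix.of fun p q =>
    let i := (p.1 : ℕ); let j := (q.1 : ℕ)
    if i = j ∧ i + 2 ≤ k then g (k - 2 - i) p.2 q.2
    else if i + 1 = k ∧ j + 1 = k then h0 (Sum.inl p.2) (Sum.inl q.2)
    else if i + 1 = k ∧ j = k then h0 (Sum.inl p.2) (Sum.inr q.2)
    else if i = k ∧ j + 1 = k then h0 (Sum.inr p.2) (Sum.inl q.2)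
    else if i = k ∧ j = k then h0 (Sum.inr p.2) (Sum.inr q.2)
    else if i = j ∧ k + 1 ≤ i then hatN F n (g (i - (k + 1))) p.2 q.2
    else 0

/-!
`γ` is a signed permutation matrix: the nonzero entry of row `p` sits in column `σ p`, for an
involution `σ` which commutes with reversal of the indices, and its signs match those of `Ω`; so
`γ` is symplectic. Since `(γ m γ⁻¹) p q = ± m (σ p) (σ q)`, the vanishing of the lower-left block
of `γ m γ⁻¹` says that `m` preserves the coordinate Lagrangian spanned by the basis vectors `e_t`
with `σ t` in the first half. On the two central blocks this is the vanishing of the lower-left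
block of `h₀`; on the block of `gᵢ` it is the condition `gᵢ ∈ B⁻`; and on the block of `ĝᵢ` it is
the same condition for `gᵢ⁻¹`, because `ĝ` is `g⁻¹` reflected in the antidiagonal.
-/

section Monomial

variable {ι R : Type*} [DecidableEq ι]

/-- The monomial matrix whose `i`-th row has the unit `s i` in column `σ i` as its only nonzero
entry. The form `Ω`, the antidiagonal matrix `J` and the representative `γ` are all of this
shape. -/
def monomialMatrix [Semiring R] (σ : Equiv.Perm ι) (s : ι → Rˣ) : Matrix ι ι R :=
  Matrix.of fun i j => if j = σ i then (s i : R) else 0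

section Semiring

variable [Semiring R] (σ τ : Equiv.Perm ι) (s t : ι → Rˣ)

theorem monomialMatrix_one_one : monomialMatrix (1 : Equiv.Perm ι) (1 : ι → Rˣ) = 1 := by
  ext i j
  simp [monomialMatrix, one_apply, eq_comm]

theorem transpose_monomialMatrix :
    (monomialMatrix σ s)ᵀ = monomialMatrix σ⁻¹ fun i => s (σ⁻¹ i) := by
  ext i j
  simp only [monomialMatrix, transpose_apply, of_apply, Equiv.Perm.eq_inv_iff_eq, eq_comm (a := i)]
  split_ifs with h
  · rw [← h, Equiv.Perm.coe_inv, Equiv.symm_apply_apply]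
  · rfl

variable [Fintype ι]

theorem monomialMatrix_mul_apply (M : Matrix ι ι R) (i j : ι) :
    (monomialMatrix σ s * M) i j = s i * M (σ i) j := by
  simp [monomialMatrix, mul_apply]

theorem mul_monomialMatrix_apply (M : Matrix ι ι R) (i j : ι) :
    (M * monomialMatrix σ s) i j = M i (σ⁻¹ j) * s (σ⁻¹ j) := by
  have h (x : ι) : j = σ x ↔ x = σ⁻¹ j := by rw [Equiv.Perm.eq_inv_iff_eq, eq_comm]
  simp only [monomialMatrix, mul_apply, of_apply, h, mul_ite, mul_zero, Finset.sum_ite_eq',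
    Finset.mem_univ, if_true]

theorem monomialMatrix_mul :
    monomialMatrix σ s * monomialMatrix τ t = monomialMatrix (τ * σ) fun i => s i * t (σ i) := by
  ext i j
  rw [monomialMatrix_mul_apply]
  simp only [monomialMatrix, of_apply, mul_ite, mul_zero]
  rfl

variable {σ τ s t} in
theorem transpose_monomialMatrix_mul_mul (hστ : Commute σ τ)
    (h : ∀ i, s i * t i * s (τ i) = t (σ i)) :
    (monomialMatrix σ s)ᵀ * monomialMatrix τ t * monomialMatrix σ s = monomialMatrix τ t := by
  rw [transpose_monomialMatrix, monomialMatrix_mul, monomialMatrix_mul]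
  congr 1
  · rw [← mul_assoc, hστ.eq, mul_inv_cancel_right]
  · ext i
    simp [h]

end Semiring

variable [CommRing R] [Fintype ι] (σ : Equiv.Perm ι) (s : ι → Rˣ)

theorem monomialMatrix_mul_inv_perm :
    monomialMatrix σ s * monomialMatrix σ⁻¹ (fun i => (s (σ⁻¹ i))⁻¹) = 1 := by
  rw [monomialMatrix_mul, ← monomialMatrix_one_one]
  congr 1
  · exact inv_mul_cancel σ
  · ext i
    simp

theorem inv_monomialMatrix :
    (monomialMatrix σ s)⁻¹ = monomialMatrix σ⁻¹ fun i => (s (σ⁻¹ i))⁻¹ :=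
  inv_eq_right_inv (monomialMatrix_mul_inv_perm σ s)

theorem isUnit_monomialMatrix : IsUnit (monomialMatrix σ s) :=
  .of_mul_eq_one _ (monomialMatrix_mul_inv_perm σ s)

theorem monomialMatrix_conj_apply (M : Matrix ι ι R) (i j : ι) :
    (monomialMatrix σ s * M * (monomialMatrix σ s)⁻¹) i j =
      s i * M (σ i) (σ j) * ↑(s j)⁻¹ := by
  simp [inv_monomialMatrix, mul_monomialMatrix_apply, monomialMatrix_mul_apply]

end Monomial

section General

variable {ι κ κ' R : Type*} [Fintype ι]

/-- The hypothesis `hM` says that `M` maps the span of the basis vectors indexed by `f` to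
itself. -/
theorem mul_submatrix_of_apply_eq_zero [NonUnitalNonAssocSemiring R] [Fintype κ]
    (A : Matrix κ' ι R) {M : Matrix ι ι R} {f : κ → ι} (hf : f.Injective)
    (hM : ∀ x ∉ Set.range f, ∀ v, M x (f v) = 0) :
    (A * M).submatrix id f = A.submatrix id f * M.submatrix f f := by
  ext i v
  simp only [submatrix_apply, mul_apply, id]
  exact (Fintype.sum_of_injective f hf _ _ (fun x hx => by rw [hM x hx, mul_zero])
    fun _ => rfl).symm

theorem transpose_mul_mul_submatrix [CommSemiring R] [Fintype κ] [Fintype κ']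
    (B : Matrix ι ι R) {M : Matrix ι ι R} {f : κ → ι} {f' : κ' → ι}
    (hf : f.Injective) (hf' : f'.Injective)
    (hM : ∀ x ∉ Set.range f, ∀ v, M x (f v) = 0)
    (hM' : ∀ x ∉ Set.range f', ∀ v, M x (f' v) = 0) :
    (Mᵀ * B * M).submatrix f f' =
      (M.submatrix f f)ᵀ * B.submatrix f f' * M.submatrix f' f' := by
  have hleft : (Mᵀ * B).submatrix f id = (M.submatrix f f)ᵀ * B.submatrix f id := by
    simpa [transpose_mul] using
      congrArg transpose (mul_submatrix_of_apply_eq_zero Bᵀ hf hM)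
  calc (Mᵀ * B * M).submatrix f f' = ((Mᵀ * B).submatrix f id * M).submatrix id f' := rfl
    _ = (M.submatrix f f)ᵀ * B.submatrix f f' * M.submatrix f' f' := by
      rw [hleft, mul_submatrix_of_apply_eq_zero _ hf' hM']
      rfl

theorem inv_apply_eq_zero_of_apply_eq_zero [CommRing R] [DecidableEq ι] {g : Matrix ι ι R}
    (hg : IsUnit g) (P : ι → Prop) (h : ∀ a b, P a → ¬ P b → g a b = 0) {a b : ι}
    (ha : P a) (hb : ¬ P b) : g⁻¹ a b = 0 := by
  classical
  have := hg.invertible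
  have htri : g.BlockTriangular fun a => decide (P a) := by
    intro a b hab
    simp only [Bool.lt_iff, decide_eq_true_eq, decide_eq_false_iff_not] at hab
    exact h a b hab.2 hab.1
  exact blockTriangular_inv_of_blockTriangular htri (by simp [ha, hb])

end General

section Siegel

variable {F} {k n : ℕ}

theorem Jmat_eq_monomialMatrix : Jmat F n = monomialMatrix Fin.revPerm 1 := by
  ext a b
  simp only [Jmat, monomialMatrix, of_apply, Fin.revPerm_apply, Fin.ext_iff, Fin.val_rev,
    Pi.one_apply, Units.val_one]
  congr 1
  ext; omega

theorem Jmat_mul_Jmat : Jmat F n * Jmat F n = 1 := by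
  rw [Jmat_eq_monomialMatrix, monomialMatrix_mul, ← monomialMatrix_one_one]
  congr 1
  · ext; simp
  · ext; simp

theorem transpose_Jmat : (Jmat F n)ᵀ = Jmat F n := by
  rw [Jmat_eq_monomialMatrix, transpose_monomialMatrix]
  rfl

theorem hatN_apply (g : Matrix (Fin n) (Fin n) F) (a b : Fin n) :
    hatN F n g a b = g⁻¹ b.rev a.rev := by
  rw [hatN, Jmat_eq_monomialMatrix, mul_monomialMatrix_apply, monomialMatrix_mul_apply,
    ← transpose_nonsing_inv]
  simp [Equiv.Perm.inv_def]

theorem transpose_mul_Jmat_mul_hatN {g : Matrix (Fin n) (Fin n) F} (hg : IsUnit g) :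
    gᵀ * Jmat F n * hatN F n g = Jmat F n := by
  have hdet : IsUnit gᵀ.det := (isUnit_iff_isUnit_det _).1 ((isUnit_transpose g).2 hg)
  calc gᵀ * Jmat F n * hatN F n g
      = gᵀ * (Jmat F n * Jmat F n) * (gᵀ)⁻¹ * Jmat F n := by
        simp only [hatN, Matrix.mul_assoc]
    _ = Jmat F n := by rw [Jmat_mul_Jmat, mul_one, mul_nonsing_inv _ hdet, one_mul]

theorem transpose_hatN_mul_Jmat_mul {g : Matrix (Fin n) (Fin n) F} (hg : IsUnit g) :
    (hatN F n g)ᵀ * Jmat F n * g = Jmat F n := by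
  simpa [transpose_mul, transpose_Jmat, Matrix.mul_assoc] using
    congrArg transpose (transpose_mul_Jmat_mul_hatN hg)

/-- The involution `(i, a) ↦ (2k - 1 - i, n - 1 - a)` of the index set, along which `Ω` is
monomial. -/
def blockRev (k n : ℕ) : Equiv.Perm (Fin (2 * k) × Fin n) :=
  Equiv.prodCongr Fin.revPerm Fin.revPerm

theorem OmegaB_eq_monomialMatrix :
    OmegaB F k n = monomialMatrix (blockRev k n) fun p => if (p.1 : ℕ) < k then 1 else -1 := by
  ext p q
  simp only [OmegaB, monomialMatrix, blockRev, of_apply, Equiv.prodCongr_apply, Prod.map,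
    Fin.revPerm_apply, Prod.ext_iff, Fin.ext_iff, Fin.val_rev, apply_ite Units.val, Units.val_one,
    Units.val_neg]
  congr 1
  ext; omega

theorem isUnit_OmegaB : IsUnit (OmegaB F k n) := by
  rw [OmegaB_eq_monomialMatrix]
  exact isUnit_monomialMatrix _ _

theorem mem_SpB_iff {g : Matrix (Fin (2 * k) × Fin n) (Fin (2 * k) × Fin n) F} :
    g ∈ SpB F k n ↔ gᵀ * OmegaB F k n * g = OmegaB F k n := by
  refine ⟨And.right, fun h => ⟨?_, h⟩⟩
  have hu : IsUnit (gᵀ * OmegaB F k n * g) := by rw [h]; exact isUnit_OmegaB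
  exact isUnit_of_mul_isUnit_right hu

theorem mul_mem_SpB {g h : Matrix (Fin (2 * k) × Fin n) (Fin (2 * k) × Fin n) F}
    (hg : g ∈ SpB F k n) (hh : h ∈ SpB F k n) : g * h ∈ SpB F k n := by
  refine mem_SpB_iff.2 ?_
  calc (g * h)ᵀ * OmegaB F k n * (g * h) = hᵀ * (gᵀ * OmegaB F k n * g) * h := by
        simp only [transpose_mul, Matrix.mul_assoc]
    _ = OmegaB F k n := by rw [hg.2, hh.2]

theorem inv_mem_SpB {g : Matrix (Fin (2 * k) × Fin n) (Fin (2 * k) × Fin n) F}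
    (hg : g ∈ SpB F k n) : g⁻¹ ∈ SpB F k n := by
  have hdet : IsUnit g.det := (isUnit_iff_isUnit_det _).1 hg.1
  refine mem_SpB_iff.2 ?_
  calc (g⁻¹)ᵀ * OmegaB F k n * g⁻¹ = (g⁻¹)ᵀ * (gᵀ * OmegaB F k n * g) * g⁻¹ :=
        congrArg ((g⁻¹)ᵀ * · * g⁻¹) hg.2.symm
    _ = (g * g⁻¹)ᵀ * OmegaB F k n * (g * g⁻¹) := by
      simp only [transpose_mul, Matrix.mul_assoc]
    _ = OmegaB F k n := by
      rw [mul_nonsing_inv _ hdet, transpose_one, Matrix.one_mul, Matrix.mul_one]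

end Siegel

section Representative

variable {F} {k n : ℕ} {ρ : Fin (2 * k) → ℕ}

/-- The map on indices underlying `γ`, where `ρ i` stands for the rank of the diagonal block `i`:
it sends row `p` of `γ` to the column of its nonzero entry. -/
def gammaFun (n : ℕ) (ρ : Fin (2 * k) → ℕ) (p : Fin (2 * k) × Fin n) : Fin (2 * k) × Fin n :=
  if h : (p.1 : ℕ) < k ∧ (p.2 : ℕ) + ρ p.1 < n then (p.1.rev, ⟨p.2 + ρ p.1, h.2⟩)
  else if k ≤ (p.1 : ℕ) ∧ ρ p.1 ≤ (p.2 : ℕ) then (p.1.rev, ⟨p.2 - ρ p.1, by omega⟩)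
  else p

theorem gammaFun_of_lt {p : Fin (2 * k) × Fin n} (hk : (p.1 : ℕ) < k)
    (hn : (p.2 : ℕ) + ρ p.1 < n) : gammaFun n ρ p = (p.1.rev, ⟨p.2 + ρ p.1, hn⟩) :=
  dif_pos ⟨hk, hn⟩

theorem gammaFun_of_le {p : Fin (2 * k) × Fin n} (hk : k ≤ (p.1 : ℕ)) (hp : ρ p.1 ≤ (p.2 : ℕ)) :
    gammaFun n ρ p = (p.1.rev, ⟨p.2 - ρ p.1, by omega⟩) := by
  rw [gammaFun, dif_neg (by omega), if_pos ⟨hk, hp⟩]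

theorem gammaFun_of_not {p : Fin (2 * k) × Fin n} (hlt : ¬ ((p.1 : ℕ) < k ∧ (p.2 : ℕ) + ρ p.1 < n))
    (hle : ¬ (k ≤ (p.1 : ℕ) ∧ ρ p.1 ≤ (p.2 : ℕ))) : gammaFun n ρ p = p := by
  rw [gammaFun, dif_neg hlt, if_neg hle]

theorem gammaFun_involutive (hρ : ∀ i, ρ i.rev = ρ i) : Function.Involutive (gammaFun n ρ) := by
  intro p
  by_cases hlt : (p.1 : ℕ) < k ∧ (p.2 : ℕ) + ρ p.1 < n
  · rw [gammaFun_of_lt hlt.1 hlt.2, gammaFun_of_le]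
    · simp [hρ]
    · rw [Fin.val_rev]
      omega
    · simp [hρ]
  by_cases hle : k ≤ (p.1 : ℕ) ∧ ρ p.1 ≤ (p.2 : ℕ)
  · rw [gammaFun_of_le hle.1 hle.2, gammaFun_of_lt]
    · simp [hρ, hle.2]
    · rw [Fin.val_rev]
      omega
    · simp [hρ, hle.2]
  · rw [gammaFun_of_not hlt hle, gammaFun_of_not hlt hle]

theorem gammaFun_blockRev (hρ : ∀ i, ρ i.rev = ρ i) (p : Fin (2 * k) × Fin n) :
    gammaFun n ρ (blockRev k n p) = blockRev k n (gammaFun n ρ p) := by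
  obtain ⟨i, a⟩ := p
  simp only [blockRev, Equiv.prodCongr_apply, Prod.map, Fin.revPerm_apply]
  by_cases hlt : (i : ℕ) < k ∧ (a : ℕ) + ρ i < n
  · rw [gammaFun_of_lt (p := (i, a)) hlt.1 hlt.2, gammaFun_of_le] <;>
      simp only [hρ, Prod.mk.injEq, Fin.ext_iff, Fin.val_rev, true_and] <;> omega
  by_cases hle : k ≤ (i : ℕ) ∧ ρ i ≤ (a : ℕ)
  · rw [gammaFun_of_le (p := (i, a)) hle.1 hle.2, gammaFun_of_lt] <;>
      simp only [hρ, Prod.mk.injEq, Fin.ext_iff, Fin.val_rev, true_and] <;> omega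
  · rw [gammaFun_of_not (p := (i, a)) hlt hle, gammaFun_of_not] <;>
      simp only [hρ, Fin.val_rev] <;> omega

theorem gammaFun_fst_lt_iff (p : Fin (2 * k) × Fin n) :
    ((gammaFun n ρ p).1 : ℕ) < k ↔
      (p.1 : ℕ) < k ∧ n ≤ (p.2 : ℕ) + ρ p.1 ∨ k ≤ (p.1 : ℕ) ∧ ρ p.1 ≤ (p.2 : ℕ) := by
  simp only [gammaFun]
  split_ifs <;> (try simp only [Fin.val_rev]) <;> omega

/-- The permutation of the index set underlying `γ`. -/
def gammaPerm (n : ℕ) (hρ : ∀ i, ρ i.rev = ρ i) : Equiv.Perm (Fin (2 * k) × Fin n) :=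
  (gammaFun_involutive hρ).toPerm _

variable (F) in
/-- The signs of the nonzero entries of `γ`; the sign `-1` comes from the blocks `ε'`. -/
def gammaSign (ρ : Fin (2 * k) → ℕ) (p : Fin (2 * k) × Fin n) : Fˣ :=
  if (p.1 : ℕ) < k ∧ (p.2 : ℕ) + ρ p.1 < n then -1 else 1

theorem monomialMatrix_gammaPerm_mem_SpB (hρ : ∀ i, ρ i.rev = ρ i) :
    monomialMatrix (gammaPerm n hρ) (gammaSign F ρ) ∈ SpB F k n := by
  rw [mem_SpB_iff, OmegaB_eq_monomialMatrix]
  refine transpose_monomialMatrix_mul_mul (Equiv.ext fun p => gammaFun_blockRev hρ p) ?_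
  intro p
  have hsign : gammaSign F ρ (blockRev k n p) =
      if k ≤ (p.1 : ℕ) ∧ ρ p.1 ≤ (p.2 : ℕ) then -1 else 1 := by
    simp only [gammaSign, blockRev, Equiv.prodCongr_apply, Prod.map, Fin.revPerm_apply, hρ,
      Fin.val_rev]
    exact if_congr (by omega) rfl rfl
  rw [hsign, gammaSign, gammaPerm, Function.Involutive.coe_toPerm]
  by_cases hlt : (p.1 : ℕ) < k ∧ (p.2 : ℕ) + ρ p.1 < n
  · have hrev : ¬ (p.1.rev : ℕ) < k := by rw [Fin.val_rev]; omega
    rw [gammaFun_of_lt hlt.1 hlt.2, if_pos hlt, if_pos hlt.1, if_neg (by omega), if_neg hrev]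
    simp
  by_cases hle : k ≤ (p.1 : ℕ) ∧ ρ p.1 ≤ (p.2 : ℕ)
  · have hrev : (p.1.rev : ℕ) < k := by rw [Fin.val_rev]; omega
    rw [gammaFun_of_le hle.1 hle.2, if_neg hlt, if_neg (by omega), if_pos hle, if_pos hrev]
    simp
  · rw [gammaFun_of_not hlt hle, if_neg hlt, if_neg hle, one_mul, mul_one]

/-- The rank of the diagonal block `i` of `γ`: it is `r_t` in the blocks `k - 1 - t` and `k + t`,
and `n` in the two central blocks, where `γ` is the identity. -/
def blockRank (k n : ℕ) (rr : ℕ → ℕ) (i : Fin (2 * k)) : ℕ :=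
  if (i : ℕ) + 2 ≤ k then rr (k - 2 - i) else if k + 1 ≤ (i : ℕ) then rr (i - (k + 1)) else n

theorem blockRank_rev (rr : ℕ → ℕ) (i : Fin (2 * k)) :
    blockRank k n rr i.rev = blockRank k n rr i := by
  simp only [blockRank, Fin.val_rev]
  split_ifs <;> first | rfl | (exfalso; omega) | (congr 1; omega)

theorem blockRank_of_central (rr : ℕ → ℕ) {i : Fin (2 * k)}
    (hi : (i : ℕ) + 1 = k ∨ (i : ℕ) = k) : blockRank k n rr i = n := by
  rw [blockRank, if_neg (by omega), if_neg (by omega)]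

theorem gammaR_apply (rr : ℕ → ℕ) (p q : Fin (2 * k) × Fin n) :
    gammaR F k n rr p q =
      if p.1 = q.1 then
        if (p.1 : ℕ) < k then muB' F n (blockRank k n rr p.1) p.2 q.2
        else muB F n (blockRank k n rr p.1) p.2 q.2
      else if q.1 = p.1.rev then
        if (p.1 : ℕ) < k then epsB' F n (blockRank k n rr p.1) p.2 q.2
        else epsB F n (blockRank k n rr p.1) p.2 q.2
      else 0 := by
  obtain ⟨⟨i, hi⟩, a⟩ := p
  obtain ⟨⟨j, hj⟩, b⟩ := q
  simp only [gammaR, of_apply, Fin.ext_iff, Fin.val_rev]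
  rcases eq_or_ne i j with rfl | hij
  · by_cases h1 : i + 2 ≤ k
    · simp [blockRank, h1, show i < k by omega]
    by_cases h2 : k + 1 ≤ i
    · simp [blockRank, h1, h2, show ¬ i < k by omega, show i + 1 ≠ k by omega, show i ≠ k by omega]
    · simp [blockRank, h1, h2, muB, muB', show i + 1 = k ∨ i = k by omega, Fin.ext_iff]
  · rcases eq_or_ne (i + j + 1) (2 * k) with hrev | hrev
    · obtain rfl : j = 2 * k - (i + 1) := by omega
      by_cases h1 : i + 2 ≤ k
      · simp [blockRank, h1, hij, hrev, show i < k by omega]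
      by_cases h2 : k + 1 ≤ i
      · simp [blockRank, h1, h2, hij, hrev, show ¬ i < k by omega,
          show 2 * k - (i + 1) + 2 ≤ k by omega,
          show k - 2 - (2 * k - (i + 1)) = i - (k + 1) by omega]
      · simp [blockRank, h1, h2, hij, epsB, epsB', show ¬ 2 * k - (i + 1) + 2 ≤ k by omega,
          a.2.not_ge]
    · simp [hij, hrev, show j ≠ 2 * k - (i + 1) by omega]

theorem gammaR_eq_monomialMatrix (rr : ℕ → ℕ) :
    gammaR F k n rr =
      monomialMatrix (gammaPerm n (blockRank_rev (n := n) rr))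
        (gammaSign F (blockRank k n rr)) := by
  ext p q
  rw [gammaR_apply]
  change _ = if q = gammaFun n (blockRank k n rr) p then ((gammaSign F _ p : Fˣ) : F) else 0
  rw [gammaSign]
  generalize blockRank k n rr = ρ
  by_cases hlt : (p.1 : ℕ) < k ∧ (p.2 : ℕ) + ρ p.1 < n
  · rw [gammaFun_of_lt hlt.1 hlt.2]
    simp only [muB', epsB', of_apply, hlt, Prod.ext_iff, Fin.ext_iff, Fin.val_rev, and_self,
      true_and, if_true, Units.val_neg, Units.val_one]
    split_ifs <;> first | rfl | omega
  by_cases hle : k ≤ (p.1 : ℕ) ∧ ρ p.1 ≤ (p.2 : ℕ)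
  · rw [gammaFun_of_le hle.1 hle.2]
    simp only [muB, epsB, of_apply, hle.1.not_gt, false_and, Prod.ext_iff, Fin.ext_iff,
      Fin.val_rev, if_false, Units.val_one]
    split_ifs <;> first | rfl | omega
  · rw [gammaFun_of_not hlt hle]
    simp only [muB, epsB, muB', epsB', of_apply, hlt, Prod.ext_iff, Fin.ext_iff, Fin.val_rev,
      if_false, Units.val_one]
    split_ifs <;> first | rfl | omega

end Representative

section Levi

variable {F} {k n : ℕ} {g : ℕ → Matrix (Fin n) (Fin n) F}
  {h0 : Matrix (Fin n ⊕ Fin n) (Fin n ⊕ Fin n) F}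

/-- The embedding of the index set of `Sp_{2n}` as the two central blocks. -/
def centralIndex (n : ℕ) (hk : 0 < k) : Fin n ⊕ Fin n → Fin (2 * k) × Fin n :=
  Sum.elim (Prod.mk ⟨k - 1, by omega⟩) (Prod.mk ⟨k, by omega⟩)

theorem centralIndex_injective (hk : 0 < k) : (centralIndex n hk).Injective := by
  refine (Prod.mk_right_injective _).sumElim (Prod.mk_right_injective _) fun a b h => ?_
  simp only [Prod.mk.injEq, Fin.mk.injEq] at h
  omega

theorem mem_range_centralIndex (hk : 0 < k) {p : Fin (2 * k) × Fin n} :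
    p ∈ Set.range (centralIndex n hk) ↔ (p.1 : ℕ) + 1 = k ∨ (p.1 : ℕ) = k := by
  simp only [centralIndex, Set.Sum.elim_range, Set.mem_union, Set.mem_range, Prod.ext_iff,
    Fin.ext_iff, exists_and_left]
  have (a : Fin n) : ∃ b : Fin n, (b : ℕ) = a := ⟨a, rfl⟩
  simp only [this, and_true]
  omega

theorem OmegaB_submatrix_centralIndex (hk : 0 < k) :
    (OmegaB F k n).submatrix (centralIndex n hk) (centralIndex n hk) = Omega2 F n := by
  ext (a | a) (b | b) <;>
    simp only [OmegaB, Omega2, Jmat, centralIndex, submatrix_apply, of_apply, Sum.elim_inl,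
      Sum.elim_inr, fromBlocks_apply₁₁, fromBlocks_apply₁₂, fromBlocks_apply₂₁,
      fromBlocks_apply₂₂, Matrix.zero_apply, Matrix.neg_apply] <;>
    split_ifs <;> first | rfl | omega | exact neg_zero.symm

theorem OmegaB_submatrix_centralIndex_mk (hk : 0 < k) {j : Fin (2 * k)}
    (hj : ¬ ((j : ℕ) + 1 = k ∨ (j : ℕ) = k)) :
    (OmegaB F k n).submatrix (centralIndex n hk) (Prod.mk j) = 0 := by
  ext u b
  have hu := (mem_range_centralIndex hk).1 (Set.mem_range_self u)
  exact if_neg fun h => by simp only at h; omega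

theorem OmegaB_submatrix_mk_centralIndex (hk : 0 < k) {i : Fin (2 * k)}
    (hi : ¬ ((i : ℕ) + 1 = k ∨ (i : ℕ) = k)) :
    (OmegaB F k n).submatrix (Prod.mk i) (centralIndex n hk) = 0 := by
  ext a u
  have hu := (mem_range_centralIndex hk).1 (Set.mem_range_self u)
  exact if_neg fun h => by simp only at h; omega

theorem OmegaB_submatrix_mk (i j : Fin (2 * k)) :
    (OmegaB F k n).submatrix (Prod.mk i) (Prod.mk j) =
      if j = i.rev then (if (i : ℕ) < k then (1 : F) else -1) • Jmat F n else 0 := by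
  have hrev : (i : ℕ) + j + 1 = 2 * k ↔ j = i.rev := by
    rw [Fin.ext_iff, Fin.val_rev]
    omega
  ext a b
  simp only [OmegaB, submatrix_apply, of_apply, hrev, ite_and]
  by_cases h : j = i.rev <;> simp [h, Jmat]

theorem mLevi_submatrix_centralIndex (hk : 0 < k) :
    (mLevi F k n g h0).submatrix (centralIndex n hk) (centralIndex n hk) = h0 := by
  have hk1 : k - 1 + 1 = k := by omega
  have hk2 : ¬ k - 1 + 2 ≤ k := by omega
  have hne : k - 1 ≠ k := by omega
  ext (a | a) (b | b) <;> simp [mLevi, centralIndex, hk1, hk2, hne, hne.symm]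

theorem mLevi_apply_centralIndex (hk : 0 < k) {p : Fin (2 * k) × Fin n}
    (hp : p ∉ Set.range (centralIndex n hk)) (u : Fin n ⊕ Fin n) :
    mLevi F k n g h0 p (centralIndex n hk u) = 0 := by
  have hu := (mem_range_centralIndex hk).1 (Set.mem_range_self u)
  rw [mem_range_centralIndex] at hp
  simp only [mLevi, of_apply]
  split_ifs <;> first | rfl | omega

/-- The diagonal block `i` of `m(h₀, g₁, …, g_{k-1})`, for `i` not one of the two central
blocks. -/
noncomputable def leviBlock (k : ℕ) (g : ℕ → Matrix (Fin n) (Fin n) F) (i : Fin (2 * k)) :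
    Matrix (Fin n) (Fin n) F :=
  if (i : ℕ) < k then g (k - 2 - i) else hatN F n (g (i - (k + 1)))

theorem mLevi_apply_of_noncentral {j : Fin (2 * k)} (hj : ¬ ((j : ℕ) + 1 = k ∨ (j : ℕ) = k))
    (p : Fin (2 * k) × Fin n) (b : Fin n) :
    mLevi F k n g h0 p (j, b) = if p.1 = j then leviBlock k g j p.2 b else 0 := by
  obtain ⟨i, a⟩ := p
  rcases eq_or_ne i j with rfl | hij
  · simp only [mLevi, leviBlock, of_apply, true_and, if_true]
    split_ifs <;> first | rfl | omega
  · rw [if_neg hij]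
    rw [ne_eq, Fin.ext_iff] at hij
    simp only [mLevi, of_apply]
    split_ifs <;> first | rfl | omega

theorem mLevi_submatrix_mk {j : Fin (2 * k)} (hj : ¬ ((j : ℕ) + 1 = k ∨ (j : ℕ) = k)) :
    (mLevi F k n g h0).submatrix (Prod.mk j) (Prod.mk j) = leviBlock k g j := by
  ext a b
  simp [mLevi_apply_of_noncentral hj]

theorem mLevi_apply_mk_of_notMem_range {j : Fin (2 * k)}
    (hj : ¬ ((j : ℕ) + 1 = k ∨ (j : ℕ) = k)) {p : Fin (2 * k) × Fin n}
    (hp : p ∉ Set.range (Prod.mk j : Fin n → _)) (b : Fin n) :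
    mLevi F k n g h0 p (j, b) = 0 := by
  rw [mLevi_apply_of_noncentral hj, if_neg]
  rintro rfl
  exact hp ⟨p.2, rfl⟩

theorem transpose_leviBlock_mul_Jmat_mul (hg : ∀ t, t + 2 ≤ k → IsUnit (g t)) {i : Fin (2 * k)}
    (hi : ¬ ((i : ℕ) + 1 = k ∨ (i : ℕ) = k)) :
    (leviBlock k g i)ᵀ * Jmat F n * leviBlock k g i.rev = Jmat F n := by
  by_cases h : (i : ℕ) < k
  · have hidx : 2 * k - (i + 1) - (k + 1) = k - 2 - i := by omega
    rw [leviBlock, if_pos h, leviBlock, Fin.val_rev, if_neg (by omega), hidx]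
    exact transpose_mul_Jmat_mul_hatN (hg _ (by omega))
  · have hidx : k - 2 - (2 * k - (i + 1)) = i - (k + 1) := by omega
    rw [leviBlock, if_neg h, leviBlock, Fin.val_rev, if_pos (by omega), hidx]
    exact transpose_hatN_mul_Jmat_mul (hg _ (by omega))

theorem transpose_mLevi_mul_OmegaB_mul_submatrix_mk (hg : ∀ t, t + 2 ≤ k → IsUnit (g t))
    {i j : Fin (2 * k)} (hi : ¬ ((i : ℕ) + 1 = k ∨ (i : ℕ) = k))
    (hj : ¬ ((j : ℕ) + 1 = k ∨ (j : ℕ) = k)) :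
    ((mLevi F k n g h0)ᵀ * OmegaB F k n * mLevi F k n g h0).submatrix (Prod.mk i) (Prod.mk j) =
      (OmegaB F k n).submatrix (Prod.mk i) (Prod.mk j) := by
  rw [transpose_mul_mul_submatrix _ (Prod.mk_right_injective i) (Prod.mk_right_injective j)
    (fun _ => mLevi_apply_mk_of_notMem_range hi) (fun _ => mLevi_apply_mk_of_notMem_range hj),
    mLevi_submatrix_mk hi, mLevi_submatrix_mk hj, OmegaB_submatrix_mk]
  rcases eq_or_ne j i.rev with rfl | h
  · rw [if_pos rfl, Matrix.mul_smul, Matrix.smul_mul, transpose_leviBlock_mul_Jmat_mul hg hi]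
  · rw [if_neg h, Matrix.mul_zero, Matrix.zero_mul]

theorem mLevi_mem_SpB (hk : 0 < k) (hg : ∀ t, t + 2 ≤ k → IsUnit (g t))
    (hh0 : h0ᵀ * Omega2 F n * h0 = Omega2 F n) : mLevi F k n g h0 ∈ SpB F k n := by
  rw [mem_SpB_iff]
  set m := mLevi F k n g h0
  set c := centralIndex n hk
  have hc : c.Injective := centralIndex_injective hk
  have hcc : (mᵀ * OmegaB F k n * m).submatrix c c = (OmegaB F k n).submatrix c c := by
    rw [transpose_mul_mul_submatrix _ hc hc (fun _ => mLevi_apply_centralIndex hk)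
      (fun _ => mLevi_apply_centralIndex hk), mLevi_submatrix_centralIndex,
      OmegaB_submatrix_centralIndex, hh0]
  have hcb (j : Fin (2 * k)) (hj : ¬ ((j : ℕ) + 1 = k ∨ (j : ℕ) = k)) :
      (mᵀ * OmegaB F k n * m).submatrix c (Prod.mk j) =
        (OmegaB F k n).submatrix c (Prod.mk j) := by
    rw [transpose_mul_mul_submatrix _ hc (Prod.mk_right_injective j)
      (fun _ => mLevi_apply_centralIndex hk) (fun _ => mLevi_apply_mk_of_notMem_range hj),
      OmegaB_submatrix_centralIndex_mk hk hj, Matrix.mul_zero, Matrix.zero_mul]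
  have hbc (i : Fin (2 * k)) (hi : ¬ ((i : ℕ) + 1 = k ∨ (i : ℕ) = k)) :
      (mᵀ * OmegaB F k n * m).submatrix (Prod.mk i) c =
        (OmegaB F k n).submatrix (Prod.mk i) c := by
    rw [transpose_mul_mul_submatrix _ (Prod.mk_right_injective i) hc
      (fun _ => mLevi_apply_mk_of_notMem_range hi) (fun _ => mLevi_apply_centralIndex hk),
      OmegaB_submatrix_mk_centralIndex hk hi, Matrix.mul_zero, Matrix.zero_mul]
  ext ⟨i, a⟩ ⟨j, b⟩
  by_cases hi : (i : ℕ) + 1 = k ∨ (i : ℕ) = k <;> by_cases hj : (j : ℕ) + 1 = k ∨ (j : ℕ) = k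
  · obtain ⟨u, hu⟩ := (mem_range_centralIndex hk (p := (i, a))).2 hi
    obtain ⟨v, hv⟩ := (mem_range_centralIndex hk (p := (j, b))).2 hj
    rw [← hu, ← hv]
    exact congrFun₂ hcc u v
  · obtain ⟨u, hu⟩ := (mem_range_centralIndex hk (p := (i, a))).2 hi
    rw [← hu]
    exact congrFun₂ (hcb j hj) u b
  · obtain ⟨v, hv⟩ := (mem_range_centralIndex hk (p := (j, b))).2 hj
    rw [← hv]
    exact congrFun₂ (hbc i hi) a v
  · exact congrFun₂ (transpose_mLevi_mul_OmegaB_mul_submatrix_mk hg hi hj) a b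

theorem leviBlock_apply_eq_zero {rr : ℕ → ℕ} (hg : ∀ t, t + 2 ≤ k → IsUnit (g t))
    (hgB : ∀ t, t + 2 ≤ k → ∀ a b : Fin n,
      (a : ℕ) + rr t < n → n ≤ (b : ℕ) + rr t → g t a b = 0)
    {i : Fin (2 * k)} (hi : ¬ ((i : ℕ) + 1 = k ∨ (i : ℕ) = k)) {a b : Fin n}
    (ha : k ≤ ((gammaFun n (blockRank k n rr) (i, a)).1 : ℕ))
    (hb : ((gammaFun n (blockRank k n rr) (i, b)).1 : ℕ) < k) : leviBlock k g i a b = 0 := by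
  rw [← not_lt, gammaFun_fst_lt_iff] at ha
  rw [gammaFun_fst_lt_iff] at hb
  dsimp only at ha hb
  by_cases h : (i : ℕ) < k
  · have hrank : blockRank k n rr i = rr (k - 2 - i) := if_pos (by omega)
    rw [leviBlock, if_pos h]
    exact hgB _ (by omega) a b (by omega) (by omega)
  · have hrank : blockRank k n rr i = rr (i - (k + 1)) := by
      rw [blockRank, if_neg (by omega), if_pos (by omega)]
    have ht : (i : ℕ) - (k + 1) + 2 ≤ k := by omega
    rw [leviBlock, if_neg h, hatN_apply]
    refine inv_apply_eq_zero_of_apply_eq_zero (hg _ ht)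
      (fun x : Fin n => (x : ℕ) + rr (i - (k + 1)) < n)
      (fun x y hx hy => hgB _ ht x y hx (not_lt.1 hy)) ?_ ?_ <;>
    · rw [Fin.val_rev]
      omega

theorem mLevi_apply_eq_zero (hk : 0 < k) {rr : ℕ → ℕ} (hg : ∀ t, t + 2 ≤ k → IsUnit (g t))
    (hgB : ∀ t, t + 2 ≤ k → ∀ a b : Fin n,
      (a : ℕ) + rr t < n → n ≤ (b : ℕ) + rr t → g t a b = 0)
    (hh0P : h0.toBlocks₂₁ = 0) {p q : Fin (2 * k) × Fin n}
    (hp : k ≤ ((gammaFun n (blockRank k n rr) p).1 : ℕ))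
    (hq : ((gammaFun n (blockRank k n rr) q).1 : ℕ) < k) : mLevi F k n g h0 p q = 0 := by
  by_cases hqc : (q.1 : ℕ) + 1 = k ∨ (q.1 : ℕ) = k
  · obtain ⟨v, rfl⟩ := (mem_range_centralIndex hk).2 hqc
    by_cases hpc : p ∈ Set.range (centralIndex n hk)
    · obtain ⟨u, rfl⟩ := hpc
      have hentry : mLevi F k n g h0 (centralIndex n hk u) (centralIndex n hk v) = h0 u v :=
        congrFun₂ (mLevi_submatrix_centralIndex hk) u v
      have hpc := (mem_range_centralIndex hk).1 (Set.mem_range_self u)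
      rw [← not_lt, gammaFun_fst_lt_iff, blockRank_of_central rr hpc] at hp
      rw [gammaFun_fst_lt_iff, blockRank_of_central rr hqc] at hq
      rw [hentry]
      obtain a | a := u <;> obtain b | b := v <;>
        simp only [centralIndex, Sum.elim_inl, Sum.elim_inr] at hp hq
      · omega
      · omega
      · exact congrFun₂ hh0P a b
      · omega
    · exact mLevi_apply_centralIndex hk hpc v
  · obtain ⟨i, a⟩ := p
    obtain ⟨j, b⟩ := q
    rw [mLevi_apply_of_noncentral hqc]
    split_ifs with hij
    · obtain rfl : i = j := hij
      exact leviBlock_apply_eq_zero hg hgB hqc hp hq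
    · rfl

end Levi

/-- Let `h₀ ∈ P_n ⊂ Sp_{2n}` (Siegel parabolic: symplectic with vanishing lower-left
block) and for `1 ≤ i ≤ k−1` let `gᵢ ∈ B⁻_{rᵢ,n} ∩ GL_n(F)` (invertible with vanishing
upper-right `(n−rᵢ) × rᵢ` block). Then
`γ_{r₁,…,r_{k−1}} · m(h₀, g₁, …, g_{k−1}) · γ_{r₁,…,r_{k−1}}⁻¹` belongs to the Siegel
parabolic `P_{kn}` of `Sp_{2kn}`: it is symplectic and its lower-left `kn × kn` block
vanishes. -/
theorem stmt19 (k n : ℕ) (hk : 2 ≤ k) (hn : 0 < n)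
    (rr : ℕ → ℕ) (hrr : ∀ t, rr t ≤ n)
    (g : ℕ → Matrix (Fin n) (Fin n) F) (hg : ∀ t, IsUnit (g t))
    (hgB : ∀ t, t + 1 ≤ k - 1 → ∀ a b : Fin n,
      (a : ℕ) + rr t < n → n ≤ (b : ℕ) + rr t → g t a b = 0)
    (h0 : Matrix (Fin n ⊕ Fin n) (Fin n ⊕ Fin n) F)
    (hh0 : IsUnit h0 ∧ h0ᵀ * Omega2 F n * h0 = Omega2 F n)
    (hh0P : h0.toBlocks₂₁ = 0) :
    gammaR F k n rr * mLevi F k n g h0 * (gammaR F k n rr)⁻¹ ∈ SpB F k n ∧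
    ∀ p q : Fin (2 * k) × Fin n, k ≤ (p.1 : ℕ) → (q.1 : ℕ) < k →
      (gammaR F k n rr * mLevi F k n g h0 * (gammaR F k n rr)⁻¹) p q = 0 := by
  have hk0 : 0 < k := by omega
  have hg' : ∀ t, t + 2 ≤ k → IsUnit (g t) := fun t _ => hg t
  have hgB' : ∀ t, t + 2 ≤ k → ∀ a b : Fin n,
      (a : ℕ) + rr t < n → n ≤ (b : ℕ) + rr t → g t a b = 0 := fun t ht => hgB t (by omega)
  have hρ : ∀ i, blockRank k n rr i.rev = blockRank k n rr i := blockRank_rev rr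
  have hγ : monomialMatrix (gammaPerm n hρ) (gammaSign F (blockRank k n rr)) ∈ SpB F k n :=
    monomialMatrix_gammaPerm_mem_SpB hρ
  have hm : mLevi F k n g h0 ∈ SpB F k n := mLevi_mem_SpB hk0 hg' hh0.2
  rw [gammaR_eq_monomialMatrix]
  refine ⟨mul_mem_SpB (mul_mem_SpB hγ hm) (inv_mem_SpB hγ), fun p q hp hq => ?_⟩
  have hσ (x : Fin (2 * k) × Fin n) :
      gammaFun n (blockRank k n rr) (gammaPerm n hρ x) = x := gammaFun_involutive hρ x
  have hzero : mLevi F k n g h0 (gammaPerm n hρ p) (gammaPerm n hρ q) = 0 :=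
    mLevi_apply_eq_zero hk0 hg' hgB' hh0P (by rwa [hσ]) (by rwa [hσ])
  rw [monomialMatrix_conj_apply, hzero, mul_zero, zero_mul]
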